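/- Let A be a densely defined closed operator on a complex Hilbert space H with closed range. Then R(A) ⊆ R(A*) if and only if N(A) ⊆ N(A*). -/

import Mathlib

open scoped InnerProductSpace
open LinearPMap

noncomputable section

variable {H : Type*} [NormedAddCommGroup H] [InnerProductSpace ℂ H] [CompleteSpace H]

/-- The range `R(A)` of a partially defined operator, as a submodule of `H`. -/
def LinearPMap.ran (A : H →ₗ.[ℂ] H) : Submodule ℂ H :=
  LinearMap.range A.toFun

/-- The null space `N(A)` of a partially defined operator, as a submodule of `H`. -/
def LinearPMap.nul (A : H →ₗ.[ℂ] H) : Submodule ℂ H :=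
  (LinearMap.ker A.toFun).map A.domain.subtype

/-!
Orthogonality turns the claim into the equivalence `U ≤ Vᗮ ↔ V ≤ Uᗮ`: always `N(A*) = R(A)ᗮ`, and
for a closed operator with closed range also `R(A*) = N(A)ᗮ`. For the second identity, the
projection of the graph of `A` onto `R(A)` is a surjection of Banach spaces, so by the open mapping
theorem a functional `⟪w, ·⟫` that vanishes on `N(A)` factors through it. Riesz representation of
the resulting functional on `R(A)` gives a solution of `A* z = w`.
-/

section NullSpace

variable {R E F : Type*} [Ring R] [AddCommGroup E] [Module R E] [AddCommGroup F] [Module R F]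

/-- The null space `N(T)` of a partially defined operator `T`, as a submodule of the space in which
its domain lies (`LinearMap.ker T.toFun` is a submodule of the domain). It is `LinearPMap.nul` with
arbitrary scalars and different source and target. -/
def nullSpace (T : E →ₗ.[R] F) : Submodule R E :=
  (LinearMap.ker T.toFun).map T.domain.subtype

theorem mem_nullSpace_iff {T : E →ₗ.[R] F} {x : E} : x ∈ nullSpace T ↔ (x, 0) ∈ T.graph := by
  simp [nullSpace, and_comm]

end NullSpace

section Banach

variable {𝕜 E F G : Type*} [NontriviallyNormedField 𝕜]
  [NormedAddCommGroup E] [NormedSpace 𝕜 E] [CompleteSpace E]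
  [NormedAddCommGroup F] [NormedSpace 𝕜 F] [CompleteSpace F]
  [AddCommGroup G] [Module 𝕜 G] [TopologicalSpace G]

theorem exists_comp_eq_of_surjective_of_ker_le_ker {f : E →L[𝕜] F} (hf : Function.Surjective f)
    {g : E →L[𝕜] G} (hfg : f.ker ≤ g.ker) : ∃ ψ : F →L[𝕜] G, ψ ∘L f = g := by
  obtain ⟨s, hs⟩ := f.toLinearMap.exists_rightInverse_of_surjective (LinearMap.range_eq_top.2 hf)
  have hgs (x : E) : g (s (f x)) = g x := by
    have hker : s (f x) - x ∈ f.ker := by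
      simpa [sub_eq_zero] using LinearMap.congr_fun hs (f x)
    simpa [sub_eq_zero] using hfg hker
  -- `s` need not be continuous, but `g ∘ s` is, since `f` is a quotient map and `g ∘ s ∘ f = g`.
  have hcont : Continuous (g.toLinearMap ∘ₗ s) :=
    (f.isQuotientMap hf).continuous_iff.2 (g.continuous.congr fun x ↦ (hgs x).symm)
  exact ⟨⟨g.toLinearMap ∘ₗ s, hcont⟩, ContinuousLinearMap.ext hgs⟩

theorem exists_comp_rangeRestrict_eq_of_nullSpace_le_ker {T : E →ₗ.[𝕜] F} (hT : T.IsClosed)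
    (hran : IsClosed (LinearMap.range T.toFun : Set F)) {g : E →L[𝕜] G}
    (hg : nullSpace T ≤ g.ker) :
    ∃ ψ : LinearMap.range T.toFun →L[𝕜] G, ∀ x : T.domain, ψ (T.toFun.rangeRestrict x) = g x := by
  have : CompleteSpace T.graph := IsClosed.completeSpace_coe (hs := hT)
  have : CompleteSpace (LinearMap.range T.toFun) := hran.completeSpace_coe
  have hsnd (p : T.graph) : p.1.2 ∈ LinearMap.range T.toFun :=
    T.graph_map_snd_eq_range ▸ Submodule.mem_map_of_mem p.2
  let π : T.graph →L[𝕜] LinearMap.range T.toFun :=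
    (ContinuousLinearMap.snd 𝕜 E F ∘L T.graph.subtypeL).codRestrict _ hsnd
  have hπ : Function.Surjective π := by
    rintro ⟨_, x, rfl⟩
    exact ⟨⟨_, T.mem_graph x⟩, rfl⟩
  have hker : π.ker ≤ (g ∘L ContinuousLinearMap.fst 𝕜 E F ∘L T.graph.subtypeL).ker := by
    rintro ⟨⟨x, y⟩, hxy⟩ hy
    obtain rfl : y = 0 := congrArg Subtype.val hy
    exact hg (mem_nullSpace_iff.2 hxy)
  obtain ⟨ψ, hψ⟩ := exists_comp_eq_of_surjective_of_ker_le_ker hπ hker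
  exact ⟨ψ, fun x ↦ DFunLike.congr_fun hψ ⟨_, T.mem_graph x⟩⟩

end Banach

section Hilbert

variable {𝕜 E F : Type*} [RCLike 𝕜] [NormedAddCommGroup E] [InnerProductSpace 𝕜 E]
  [NormedAddCommGroup F] [InnerProductSpace 𝕜 F]

theorem range_le_orthogonal_nullSpace_of_isFormalAdjoint {S : F →ₗ.[𝕜] E} {T : E →ₗ.[𝕜] F}
    (h : S.IsFormalAdjoint T) : LinearMap.range S.toFun ≤ (nullSpace T)ᗮ := by
  rintro _ ⟨y, rfl⟩ _ ⟨x, hx, rfl⟩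
  calc ⟪(x : E), S y⟫_𝕜 = ⟪T x, (y : F)⟫_𝕜 := (h.symm x y).symm
    _ = 0 := by rw [← toFun_eq_coe, LinearMap.mem_ker.1 hx, inner_zero_left]

variable [CompleteSpace E] {T : E →ₗ.[𝕜] F}

theorem mem_graph_adjoint_iff (hd : Dense (T.domain : Set E)) {y : F} {w : E} :
    (y, w) ∈ T†.graph ↔ ∀ x : T.domain, ⟪w, (x : E)⟫_𝕜 = ⟪y, T x⟫_𝕜 := by
  constructor
  · intro h x
    obtain ⟨y, rfl, rfl⟩ := (mem_graph_iff _).1 h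
    exact adjoint_isFormalAdjoint hd y x
  · intro h
    have hy : y ∈ T†.domain := mem_adjoint_domain_of_exists y ⟨w, h⟩
    exact (mem_graph_iff _).2 ⟨⟨y, hy⟩, rfl, adjoint_apply_eq hd ⟨y, hy⟩ h⟩

theorem nullSpace_adjoint_eq_orthogonal_range (hd : Dense (T.domain : Set E)) :
    nullSpace T† = (LinearMap.range T.toFun)ᗮ := by
  ext y
  simp only [mem_nullSpace_iff, mem_graph_adjoint_iff hd, inner_zero_left,
    Submodule.mem_orthogonal', LinearMap.mem_range, forall_exists_index, forall_apply_eq_imp_iff,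
    toFun_eq_coe, eq_comm (a := (0 : 𝕜))]

theorem orthogonal_nullSpace_le_range_adjoint [CompleteSpace F] (hd : Dense (T.domain : Set E))
    (hT : T.IsClosed) (hran : IsClosed (LinearMap.range T.toFun : Set F)) :
    (nullSpace T)ᗮ ≤ LinearMap.range T†.toFun := by
  intro w hw
  have : CompleteSpace (LinearMap.range T.toFun) := hran.completeSpace_coe
  have hker : nullSpace T ≤ (innerSL 𝕜 w).ker := fun x hx ↦
    Submodule.inner_left_of_mem_orthogonal hx hw
  obtain ⟨ψ, hψ⟩ := exists_comp_rangeRestrict_eq_of_nullSpace_le_ker hT hran hker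
  let z := (InnerProductSpace.toDual 𝕜 (LinearMap.range T.toFun)).symm ψ
  have hz (x : T.domain) : ⟪w, (x : E)⟫_𝕜 = ⟪(z : F), T x⟫_𝕜 :=
    calc ⟪w, (x : E)⟫_𝕜 = ψ (T.toFun.rangeRestrict x) := (hψ x).symm
      _ = ⟪z, T.toFun.rangeRestrict x⟫_𝕜 := InnerProductSpace.toDual_symm_apply.symm
  exact mem_range_iff.2 ⟨z, (mem_graph_adjoint_iff hd).2 hz⟩

theorem range_adjoint_eq_orthogonal_nullSpace [CompleteSpace F] (hd : Dense (T.domain : Set E))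
    (hT : T.IsClosed) (hran : IsClosed (LinearMap.range T.toFun : Set F)) :
    LinearMap.range T†.toFun = (nullSpace T)ᗮ :=
  le_antisymm (range_le_orthogonal_nullSpace_of_isFormalAdjoint (adjoint_isFormalAdjoint hd))
    (orthogonal_nullSpace_le_range_adjoint hd hT hran)

theorem stmt12_general (A : E →ₗ.[𝕜] E) (hd : Dense (A.domain : Set E)) (hc : A.IsClosed)
    (hr : IsClosed (LinearMap.range A.toFun : Set E)) :
    LinearMap.range A.toFun ≤ LinearMap.range A†.toFun ↔ nullSpace A ≤ nullSpace A† := by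
  rw [range_adjoint_eq_orthogonal_nullSpace hd hc hr, nullSpace_adjoint_eq_orthogonal_range hd]
  exact Submodule.isOrtho_comm

end Hilbert

/-- Let `A` be a densely defined closed operator on a complex Hilbert
space `H` with closed range. Then `R(A) ⊆ R(A*)` if and only if `N(A) ⊆ N(A*)`. -/
theorem stmt12 (A : H →ₗ.[ℂ] H) (hd : Dense (A.domain : Set H)) (hc : A.IsClosed)
    (hr : IsClosed (A.ran : Set H)) :
    A.ran ≤ A.adjoint.ran ↔ A.nul ≤ A.adjoint.nul :=
  stmt12_general A hd hc hr
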